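/- arXiv:2109.05510 — 8 statements merged into one kernel-verified Lean document; each statement's English description precedes it below -/
import Mathlib

section
/- For every integer d ≥ 1, every real number r ≥ 1 and all vectors a, b ∈ ℝ^d, one has ⟨|a|^{r−1}a − |b|^{r−1}b, a − b⟩ ≥ (1/2)|a|^{r−1}|a − b|² + (1/2)|b|^{r−1}|a − b|². -/
open scoped RealInnerProductSpace

/-- Pointwise strong monotonicity of the Forchheimer nonlinearity `a ↦ |a|^{r-1} a`
(estimate (2.23) of the paper). -/
theorem forchheimer_pointwise_monotonicity
    (d : ℕ) (hd : 1 ≤ d) (r : ℝ) (hr : 1 ≤ r)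
    (a b : EuclideanSpace ℝ (Fin d)) :
    ⟪(‖a‖ ^ (r - 1)) • a - (‖b‖ ^ (r - 1)) • b, a - b⟫ ≥
      (1 / 2) * ‖a‖ ^ (r - 1) * ‖a - b‖ ^ 2
        + (1 / 2) * ‖b‖ ^ (r - 1) * ‖a - b‖ ^ 2 := by
  -- By polarization, the left side minus the right side is exactly half of the product in `key`,
  -- whose factors have the same sign because `t ↦ t ^ (r - 1)` and `t ↦ t ^ 2` are monotone
  -- on `[0, ∞)`.
  have key : 0 ≤ (‖a‖ ^ (r - 1) - ‖b‖ ^ (r - 1)) * (‖a‖ ^ 2 - ‖b‖ ^ 2) := by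
    have hr' : 0 ≤ r - 1 := sub_nonneg.mpr hr
    rcases le_total ‖a‖ ‖b‖ with h | h
    · exact mul_nonneg_of_nonpos_of_nonpos
        (sub_nonpos.mpr (Real.rpow_le_rpow (norm_nonneg a) h hr'))
        (sub_nonpos.mpr (pow_le_pow_left₀ (norm_nonneg a) h 2))
    · exact mul_nonneg
        (sub_nonneg.mpr (Real.rpow_le_rpow (norm_nonneg b) h hr'))
        (sub_nonneg.mpr (pow_le_pow_left₀ (norm_nonneg b) h 2))
  rw [norm_sub_sq_real]
  simp only [inner_sub_left, inner_sub_right, real_inner_smul_left,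
    real_inner_self_eq_norm_sq, real_inner_comm a b]
  linarith
end

section
/- Let d ≥ 1, let O ⊆ ℝ^d be a Lebesgue-measurable set, let r ≥ 1 be real, and let u, v : O → ℝ^d be measurable with ‖u‖_{L^{r+1}} < ∞ and ‖v‖_{L^{r+1}} < ∞. Then the function x ↦ ⟨|u(x)|^{r−1}u(x) − |v(x)|^{r−1}v(x), u(x) − v(x)⟩ is integrable on O and ∫_O ⟨|u(x)|^{r−1}u(x) − |v(x)|^{r−1}v(x), u(x) − v(x)⟩ dx ≥ (1/2)∫_O |u(x)|^{r−1}|u(x) − v(x)|² dx + (1/2)∫_O |v(x)|^{r−1}|u(x) − v(x)|² dx. -/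
/-!
Write `α = |u|^{r-1}` and `β = |v|^{r-1}`. Everything rests on the pointwise identity
`⟪α u - β v, u - v⟫ = (α/2) |u - v|² + (β/2) |u - v|² + (1/2) (α - β) (|u|² - |v|²)`
(`inner_smul_sub_smul`). Its last term is nonnegative because `t ↦ t^{r-1}` and `t ↦ t²` are both
nondecreasing on `[0, ∞)` (`rpow_sub_mul_sq_sub_nonneg`). All three terms are dominated by
`4 (|u|^{r+1} + |v|^{r+1})`: the first two by way of `a^{r-1} b² ≤ a^{r+1} + b^{r+1}`
(`rpow_mul_sq_le`), the last after dropping its negative cross terms. So all the functions involved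
are integrable and the pointwise inequality can be integrated.
-/

open MeasureTheory
open scoped RealInnerProductSpace

theorem inner_smul_sub_smul {E : Type*} [NormedAddCommGroup E] [InnerProductSpace ℝ E]
    (α β : ℝ) (x y : E) :
    ⟪α • x - β • y, x - y⟫ = (1 / 2) * (α * ‖x - y‖ ^ 2) + (1 / 2) * (β * ‖x - y‖ ^ 2)
      + (1 / 2) * ((α - β) * (‖x‖ ^ 2 - ‖y‖ ^ 2)) := by
  rw [norm_sub_sq_real]
  simp only [inner_sub_left, inner_sub_right, real_inner_smul_left, real_inner_self_eq_norm_sq,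
    real_inner_comm x y]
  ring

theorem rpow_sub_one_mul_sq {r a : ℝ} (hr : 1 ≤ r) (ha : 0 ≤ a) :
    a ^ (r - 1) * a ^ 2 = a ^ (r + 1) := by
  rw [← Real.rpow_natCast a 2, ← Real.rpow_add_of_nonneg ha (by linarith) (by norm_num)]
  congr 1
  push_cast
  ring

theorem rpow_mul_sq_le {r a b : ℝ} (hr : 1 ≤ r) (ha : 0 ≤ a) (hb : 0 ≤ b) :
    a ^ (r - 1) * b ^ 2 ≤ a ^ (r + 1) + b ^ (r + 1) := by
  have hA : 0 ≤ a ^ (r + 1) := by positivity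
  have hB : 0 ≤ b ^ (r + 1) := by positivity
  rcases le_total a b with h | h
  · have h1 : a ^ (r - 1) * b ^ 2 ≤ b ^ (r - 1) * b ^ 2 := by
      gcongr
    rw [rpow_sub_one_mul_sq hr hb] at h1
    linarith
  · have h1 : a ^ (r - 1) * b ^ 2 ≤ a ^ (r - 1) * a ^ 2 := by gcongr
    rw [rpow_sub_one_mul_sq hr ha] at h1
    linarith

theorem rpow_sub_mul_sq_sub_nonneg {r a b : ℝ} (hr : 1 ≤ r) (ha : 0 ≤ a) (hb : 0 ≤ b) :
    0 ≤ (a ^ (r - 1) - b ^ (r - 1)) * (a ^ 2 - b ^ 2) := by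
  have hr' : 0 ≤ r - 1 := by linarith
  rcases le_total a b with h | h
  · exact mul_nonneg_of_nonpos_of_nonpos
      (sub_nonpos.2 (Real.rpow_le_rpow ha h hr')) (sub_nonpos.2 (by gcongr))
  · exact mul_nonneg (sub_nonneg.2 (Real.rpow_le_rpow hb h hr')) (sub_nonneg.2 (by gcongr))

theorem rpow_norm_mul_sq_norm_sub_le {E : Type*} [NormedAddCommGroup E]
    {r : ℝ} (hr : 1 ≤ r) (x y : E) :
    ‖x‖ ^ (r - 1) * ‖x - y‖ ^ 2 ≤ 4 * (‖x‖ ^ (r + 1) + ‖y‖ ^ (r + 1)) := by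
  have h1 : ‖x - y‖ ^ 2 ≤ 2 * ‖x‖ ^ 2 + 2 * ‖y‖ ^ 2 := by
    have := norm_sub_le x y
    nlinarith [norm_nonneg (x - y), sq_nonneg (‖x‖ - ‖y‖)]
  have hα : 0 ≤ ‖x‖ ^ (r - 1) := by positivity
  have h2 := mul_le_mul_of_nonneg_left h1 hα
  have h3 := rpow_mul_sq_le hr (norm_nonneg x) (norm_nonneg y)
  have h4 := rpow_sub_one_mul_sq hr (norm_nonneg x)
  have h5 : 0 ≤ ‖y‖ ^ (r + 1) := by positivity
  linarith

/-- Integrated monotonicity of the Forchheimer nonlinearity `C(u) = |u|^{r-1}u`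
(first inequality in estimate (2.23) of the paper). -/
theorem forchheimer_integral_monotonicity
    (d : ℕ) (hd : 1 ≤ d) (O : Set (EuclideanSpace ℝ (Fin d))) (hO : MeasurableSet O)
    (r : ℝ) (hr : 1 ≤ r)
    (u v : EuclideanSpace ℝ (Fin d) → EuclideanSpace ℝ (Fin d))
    (hu : Measurable u) (hv : Measurable v)
    (hur : IntegrableOn (fun x => ‖u x‖ ^ (r + 1)) O)
    (hvr : IntegrableOn (fun x => ‖v x‖ ^ (r + 1)) O) :
    IntegrableOn
      (fun x => ⟪(‖u x‖ ^ (r - 1)) • u x - (‖v x‖ ^ (r - 1)) • v x, u x - v x⟫) O ∧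
    (∫ x in O, ⟪(‖u x‖ ^ (r - 1)) • u x - (‖v x‖ ^ (r - 1)) • v x, u x - v x⟫) ≥
      (1 / 2) * (∫ x in O, ‖u x‖ ^ (r - 1) * ‖u x - v x‖ ^ 2)
        + (1 / 2) * (∫ x in O, ‖v x‖ ^ (r - 1) * ‖u x - v x‖ ^ 2) := by
  have hS : IntegrableOn (fun x => 4 * (‖u x‖ ^ (r + 1) + ‖v x‖ ^ (r + 1))) O :=
    (hur.add hvr).const_mul 4
  have hU : IntegrableOn (fun x => ‖u x‖ ^ (r - 1) * ‖u x - v x‖ ^ 2) O := by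
    refine Integrable.mono' hS (by fun_prop) (ae_of_all _ fun x => ?_)
    rw [Real.norm_of_nonneg (by positivity)]
    exact rpow_norm_mul_sq_norm_sub_le hr (u x) (v x)
  have hV : IntegrableOn (fun x => ‖v x‖ ^ (r - 1) * ‖u x - v x‖ ^ 2) O := by
    refine Integrable.mono' hS (by fun_prop) (ae_of_all _ fun x => ?_)
    rw [Real.norm_of_nonneg (by positivity), norm_sub_rev, add_comm]
    exact rpow_norm_mul_sq_norm_sub_le hr (v x) (u x)
  have hW : IntegrableOn
      (fun x => (‖u x‖ ^ (r - 1) - ‖v x‖ ^ (r - 1)) * (‖u x‖ ^ 2 - ‖v x‖ ^ 2)) O := by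
    refine Integrable.mono' hS (by fun_prop) (ae_of_all _ fun x => ?_)
    rw [Real.norm_of_nonneg
      (rpow_sub_mul_sq_sub_nonneg hr (norm_nonneg (u x)) (norm_nonneg (v x)))]
    have h1 := rpow_sub_one_mul_sq hr (norm_nonneg (u x))
    have h2 := rpow_sub_one_mul_sq hr (norm_nonneg (v x))
    have h3 : 0 ≤ ‖u x‖ ^ (r - 1) * ‖v x‖ ^ 2 := by positivity
    have h4 : 0 ≤ ‖v x‖ ^ (r - 1) * ‖u x‖ ^ 2 := by positivity
    have h5 : 0 ≤ ‖u x‖ ^ (r + 1) := by positivity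
    have h6 : 0 ≤ ‖v x‖ ^ (r + 1) := by positivity
    linarith
  have hUV : IntegrableOn (fun x => (1 / 2) * (‖u x‖ ^ (r - 1) * ‖u x - v x‖ ^ 2)
      + (1 / 2) * (‖v x‖ ^ (r - 1) * ‖u x - v x‖ ^ 2)) O :=
    (hU.const_mul (1 / 2)).add (hV.const_mul (1 / 2))
  have hF : IntegrableOn
      (fun x => ⟪(‖u x‖ ^ (r - 1)) • u x - (‖v x‖ ^ (r - 1)) • v x, u x - v x⟫) O := by
    simp only [inner_smul_sub_smul]
    exact hUV.add (hW.const_mul (1 / 2))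
  refine ⟨hF, ?_⟩
  rw [ge_iff_le, ← integral_const_mul, ← integral_const_mul,
    ← integral_add (hU.const_mul (1 / 2)) (hV.const_mul (1 / 2))]
  refine integral_mono hUV hF fun x => ?_
  have h := rpow_sub_mul_sq_sub_nonneg hr (norm_nonneg (u x)) (norm_nonneg (v x))
  simp only [inner_smul_sub_smul]
  linarith
end

section
/- Let d ≥ 1, let O ⊆ ℝ^d be a Lebesgue-measurable set, let r ≥ 1 be real, and let u, v : O → ℝ^d be measurable with ‖u‖_{L^{r+1}} < ∞ and ‖v‖_{L^{r+1}} < ∞. Then ∫_O ⟨|u(x)|^{r−1}u(x) − |v(x)|^{r−1}v(x), u(x) − v(x)⟩ dx ≥ 2^{1−r} ‖u − v‖_{L^{r+1}}^{r+1}. -/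
open MeasureTheory
open scoped RealInnerProductSpace

/-!
The inequality holds pointwise. Fix the norms `A = ‖a‖`, `B = ‖b‖`. By polarization
`⟪‖a‖^(r-1) a - ‖b‖^(r-1) b, a - b⟫` is an affine function of `z = ‖a - b‖²`, whereas
`‖a - b‖^(r+1) = z^((r+1)/2)` is convex in `z`, since `r ≥ 1`. The difference of the two sides is
therefore concave on `[(A - B)², (A + B)²]`, the range of `z`, and it suffices to compare at the
two endpoints, i.e. for parallel and antiparallel vectors. There the claim reduces to the
superadditivity and to the midpoint convexity of `t ↦ t^r` on `[0, ∞)`, respectively.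
The pointwise bound is integrated using that the left-hand integrand is dominated by
`2 (‖u‖^(r+1) + ‖v‖^(r+1))`.
-/

/-- The scalar case with equal signs, from superadditivity of `t ↦ t ^ r`. -/
lemma sub_rpow_mul_sub_ge (r : ℝ) (hr : 1 ≤ r) {A B : ℝ} (hA : 0 ≤ A) (hB : 0 ≤ B) :
    |A - B| ^ (r + 1) ≤ (A ^ r - B ^ r) * (A - B) := by
  wlog h : B ≤ A generalizing A B
  · have := this hB hA (le_of_not_ge h)
    rw [abs_sub_comm]
    linarith
  have hAB : 0 ≤ A - B := sub_nonneg.2 h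
  have h1 := Real.add_rpow_le_rpow_add hAB hB hr
  rw [sub_add_cancel] at h1
  rw [abs_of_nonneg hAB, Real.rpow_add_one' hAB (by linarith)]
  exact mul_le_mul_of_nonneg_right (by linarith) hAB

/-- The scalar case with opposite signs, from midpoint convexity of `t ↦ t ^ r`. -/
lemma two_rpow_mul_add_rpow_le (r : ℝ) (hr : 1 ≤ r) {A B : ℝ} (hA : 0 ≤ A) (hB : 0 ≤ B) :
    2 ^ (1 - r) * (A + B) ^ (r + 1) ≤ (A ^ r + B ^ r) * (A + B) := by
  have hAB : 0 ≤ A + B := add_nonneg hA hB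
  have h1 : (A + B) ^ r ≤ 2 ^ (r - 1) * (A ^ r + B ^ r) := by
    lift A to NNReal using hA
    lift B to NNReal using hB
    exact_mod_cast NNReal.rpow_add_le_mul_rpow_add_rpow A B hr
  have h2 : (2 : ℝ) ^ (1 - r) * 2 ^ (r - 1) = 1 := by
    rw [← Real.rpow_add two_pos]; simp
  rw [Real.rpow_add_one' hAB (by linarith), ← mul_assoc]
  refine mul_le_mul_of_nonneg_right ?_ hAB
  calc (2 : ℝ) ^ (1 - r) * (A + B) ^ r ≤ 2 ^ (1 - r) * (2 ^ (r - 1) * (A ^ r + B ^ r)) := by gcongr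
    _ = A ^ r + B ^ r := by rw [← mul_assoc, h2, one_mul]

lemma rpow_sq_half (r : ℝ) {x : ℝ} (hx : 0 ≤ x) : (x ^ 2) ^ ((r + 1) / 2) = x ^ (r + 1) := by
  rw [← Real.rpow_natCast_mul hx]
  congr 1
  push_cast
  ring

/-- The pointwise form of the estimate, by concavity in `‖a - b‖ ^ 2`. -/
lemma pointwise_coercive_monotonicity {E : Type*} [NormedAddCommGroup E] [InnerProductSpace ℝ E]
    (r : ℝ) (hr : 1 ≤ r) (a b : E) :
    2 ^ (1 - r) * ‖a - b‖ ^ (r + 1) ≤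
      ⟪(‖a‖ ^ (r - 1)) • a - (‖b‖ ^ (r - 1)) • b, a - b⟫ := by
  have hA := norm_nonneg a
  have hB := norm_nonneg b
  have hz := norm_sub_sq_real a b
  have hin : ⟪(‖a‖ ^ (r - 1)) • a - (‖b‖ ^ (r - 1)) • b, a - b⟫
      = (‖a‖ ^ (r - 1) + ‖b‖ ^ (r - 1)) / 2 * ‖a - b‖ ^ 2
        + (‖a‖ ^ (r - 1) - ‖b‖ ^ (r - 1)) * (‖a‖ ^ 2 - ‖b‖ ^ 2) / 2 := by
    rw [hz]
    simp only [inner_sub_left, inner_sub_right, real_inner_smul_left,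
      real_inner_self_eq_norm_sq, real_inner_comm a b]
    ring
  have hlow : (‖a‖ - ‖b‖) ^ 2 ≤ ‖a - b‖ ^ 2 := by
    rw [hz]; nlinarith [real_inner_le_norm a b]
  have hupp : ‖a - b‖ ^ 2 ≤ (‖a‖ + ‖b‖) ^ 2 := by
    gcongr; exact norm_sub_le a b
  have hp : ∀ {x : ℝ}, 0 ≤ x → x ^ r = x ^ (r - 1) * x := fun {x} hx => by
    have := Real.rpow_add_one' (y := r - 1) hx (by linarith)
    rwa [sub_add_cancel] at this
  have e1 := sub_rpow_mul_sub_ge r hr hA hB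
  have e2 := two_rpow_mul_add_rpow_le r hr hA hB
  have hc1 : (2 : ℝ) ^ (1 - r) ≤ 1 :=
    Real.rpow_le_one_of_one_le_of_nonpos one_le_two (by linarith)
  -- For equal signs the constant is not sharp: `1` would do in place of `2 ^ (1 - r)`.
  have e1' : 2 ^ (1 - r) * |‖a‖ - ‖b‖| ^ (r + 1) ≤ (‖a‖ ^ r - ‖b‖ ^ r) * (‖a‖ - ‖b‖) :=
    (mul_le_of_le_one_left (by positivity) hc1).trans e1
  rw [hp hA, hp hB] at e2 e1'
  rw [hin]
  set A := ‖a‖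
  set B := ‖b‖
  set α := A ^ (r - 1)
  set β := B ^ (r - 1)
  set c : ℝ := 2 ^ (1 - r)
  have hc : 0 ≤ c := by positivity
  -- The difference of the two sides as a function of `z = ‖a - b‖ ^ 2`.
  let f : ℝ → ℝ := fun z => ((α + β) / 2 * z + (α - β) * (A ^ 2 - B ^ 2) / 2)
    - c * z ^ ((r + 1) / 2)
  have hconc : ConcaveOn ℝ (Set.Ici 0) f := by
    refine ConcaveOn.sub ?_ ((convexOn_rpow (by linarith)).smul hc)
    refine ⟨convex_Ici 0, fun x _ y _ s t _ _ hst => le_of_eq ?_⟩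
    simp only [smul_eq_mul]
    linear_combination ((α - β) * (A ^ 2 - B ^ 2) / 2) * hst
  have hmin := hconc.min_le_of_mem_Icc (Set.mem_Ici.2 (sq_nonneg (A - B)))
    (Set.mem_Ici.2 (sq_nonneg (A + B))) ⟨hlow, hupp⟩
  have f1 : 0 ≤ f ((A - B) ^ 2) := by
    simp only [f]
    rw [← sq_abs (A - B), rpow_sq_half r (abs_nonneg _), sq_abs]
    linarith
  have f2 : 0 ≤ f ((A + B) ^ 2) := by
    simp only [f]
    rw [rpow_sq_half r (add_nonneg hA hB)]
    linarith
  have f3 := (le_min f1 f2).trans hmin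
  simp only [f] at f3
  rw [rpow_sq_half r (norm_nonneg _)] at f3
  linarith

/-- An upper bound with a non-sharp constant, which makes the left-hand integrand integrable. -/
lemma abs_inner_forchheimer_le {E : Type*} [NormedAddCommGroup E] [InnerProductSpace ℝ E]
    (r : ℝ) (hr : 1 ≤ r) (a b : E) :
    |⟪(‖a‖ ^ (r - 1)) • a - (‖b‖ ^ (r - 1)) • b, a - b⟫| ≤
      2 * (‖a‖ ^ (r + 1) + ‖b‖ ^ (r + 1)) := by
  have hA := norm_nonneg a
  have hB := norm_nonneg b
  have hn : ∀ x : E, ‖(‖x‖ ^ (r - 1)) • x‖ = ‖x‖ ^ r := fun x => by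
    have := Real.rpow_add_one' (y := r - 1) (norm_nonneg x) (by linarith)
    rw [sub_add_cancel] at this
    rw [norm_smul, Real.norm_of_nonneg (by positivity), this]
  have h1 : ‖(‖a‖ ^ (r - 1)) • a - (‖b‖ ^ (r - 1)) • b‖ ≤ ‖a‖ ^ r + ‖b‖ ^ r := by
    simpa only [hn] using norm_sub_le ((‖a‖ ^ (r - 1)) • a) ((‖b‖ ^ (r - 1)) • b)
  have h2 : 0 ≤ (‖a‖ ^ r - ‖b‖ ^ r) * (‖a‖ - ‖b‖) :=
    le_trans (by positivity) (sub_rpow_mul_sub_ge r hr hA hB)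
  calc _ ≤ ‖(‖a‖ ^ (r - 1)) • a - (‖b‖ ^ (r - 1)) • b‖ * ‖a - b‖ := abs_real_inner_le_norm _ _
    _ ≤ (‖a‖ ^ r + ‖b‖ ^ r) * (‖a‖ + ‖b‖) := by
        gcongr
        exact norm_sub_le a b
    _ ≤ _ := by
        rw [Real.rpow_add_one' hA (by linarith), Real.rpow_add_one' hB (by linarith)]
        linarith

/-- Coercive monotonicity estimate (2.23) of the paper:
`⟨C(u) − C(v), u − v⟩ ≥ 2^{1−r} ‖u − v‖_{L^{r+1}}^{r+1}` for `C(u) = |u|^{r-1}u`. -/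
theorem forchheimer_coercive_monotonicity
    (d : ℕ) (hd : 1 ≤ d) (O : Set (EuclideanSpace ℝ (Fin d))) (hO : MeasurableSet O)
    (r : ℝ) (hr : 1 ≤ r)
    (u v : EuclideanSpace ℝ (Fin d) → EuclideanSpace ℝ (Fin d))
    (hu : Measurable u) (hv : Measurable v)
    (hur : IntegrableOn (fun x => ‖u x‖ ^ (r + 1)) O)
    (hvr : IntegrableOn (fun x => ‖v x‖ ^ (r + 1)) O) :
    (∫ x in O, ⟪(‖u x‖ ^ (r - 1)) • u x - (‖v x‖ ^ (r - 1)) • v x, u x - v x⟫) ≥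
      2 ^ (1 - r) * (∫ x in O, ‖u x - v x‖ ^ (r + 1)) := by
  have hint : IntegrableOn
      (fun x => ⟪(‖u x‖ ^ (r - 1)) • u x - (‖v x‖ ^ (r - 1)) • v x, u x - v x⟫) O := by
    refine Integrable.mono' ((hur.add hvr).const_mul 2) ?_
      (Filter.Eventually.of_forall fun x => abs_inner_forchheimer_le r hr (u x) (v x))
    have hmeas : Measurable
        (fun x => ⟪(‖u x‖ ^ (r - 1)) • u x - (‖v x‖ ^ (r - 1)) • v x, u x - v x⟫) := by
      fun_prop
    exact hmeas.aestronglyMeasurable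
  rw [ge_iff_le, ← integral_const_mul]
  exact integral_mono_of_nonneg (Filter.Eventually.of_forall fun x => by positivity) hint
    (Filter.Eventually.of_forall fun x => pointwise_coercive_monotonicity r hr (u x) (v x))
end

section
/- Let d ≥ 1, let O ⊆ ℝ^d be a Lebesgue-measurable set, let r ≥ 1 be real, and let u, v, w : O → ℝ^d be measurable with ‖u‖_{L^{r+1}}, ‖v‖_{L^{r+1}}, ‖w‖_{L^{r+1}} all finite. Then the function x ↦ ⟨|u(x)|^{r−1}u(x) − |v(x)|^{r−1}v(x), w(x)⟩ is integrable on O and |∫_O ⟨|u(x)|^{r−1}u(x) − |v(x)|^{r−1}v(x), w(x)⟩ dx| ≤ r (‖u‖_{L^{r+1}} + ‖v‖_{L^{r+1}})^{r−1} ‖u − v‖_{L^{r+1}} ‖w‖_{L^{r+1}} (with the convention x^0 = 1 when r = 1). -/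
/-!
Pointwise, `a ↦ ‖a‖^(r-1) a` satisfies
`‖‖a‖^(r-1) a - ‖b‖^(r-1) b‖ ≤ r (‖a‖ + ‖b‖)^(r-1) ‖a - b‖`. With `s = ‖a‖ ≥ t = ‖b‖`, this comes
from the two identities
`‖s^(r-1) a - t^(r-1) b‖² = (s^r - t^r)² + 2 s^(r-1) t^(r-1) (s t - ⟪a, b⟫)` and
`‖a - b‖² = (s - t)² + 2 (s t - ⟪a, b⟫)`, since Bernoulli's inequality gives
`s^r - t^r ≤ r s^(r-1) (s - t)`. By Cauchy–Schwarz the integrand is then dominated by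
`r (‖u‖ + ‖v‖)^(r-1) ‖u - v‖ ‖w‖`, and Hölder's inequality with the three exponents
`(r-1)/(r+1)`, `1/(r+1)`, `1/(r+1)` (which allows `r = 1`), followed by Minkowski's inequality
for `‖u‖ + ‖v‖`, gives integrability and the bound.
-/


open MeasureTheory
open scoped RealInnerProductSpace

/-- The tangent-line bound for the convex function `x ↦ x ^ r`, a rescaled Bernoulli inequality. -/
lemma rpow_sub_rpow_le_mul_sub {r s t : ℝ} (hr : 1 ≤ r) (ht : 0 ≤ t) (hts : t ≤ s) :
    s ^ (r - 1) * s - t ^ (r - 1) * t ≤ r * s ^ (r - 1) * (s - t) := by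
  rcases (ht.trans hts).eq_or_lt with rfl | hs
  · obtain rfl : t = 0 := le_antisymm hts ht
    simp
  have h := one_add_mul_self_le_rpow_one_add (s := t / s - 1)
    (by have : 0 ≤ t / s := by positivity
        linarith) hr
  rw [add_sub_cancel, Real.div_rpow ht hs.le, le_div_iff₀ (by positivity)] at h
  have e : ∀ x : ℝ, 0 ≤ x → x ^ (r - 1) * x = x ^ r := fun x hx => by
    conv_lhs => rw [← Real.rpow_add_one' hx (by linarith)]
    simp
  rw [e t ht]
  rw [← e s hs.le] at h
  have h2 : (1 + r * (t / s - 1)) * (s ^ (r - 1) * s)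
      = s ^ (r - 1) * s - r * s ^ (r - 1) * (s - t) := by
    field_simp
    ring
  linarith

lemma norm_forchheimer_sub_le_of_norm_le {E : Type*} [NormedAddCommGroup E]
    [InnerProductSpace ℝ E] {r : ℝ} (hr : 1 ≤ r) {a b : E} (hab : ‖b‖ ≤ ‖a‖) :
    ‖(‖a‖ ^ (r - 1)) • a - (‖b‖ ^ (r - 1)) • b‖ ≤ r * ‖a‖ ^ (r - 1) * ‖a - b‖ := by
  have hlin := rpow_sub_rpow_le_mul_sub hr (norm_nonneg b) hab
  have hS : 0 ≤ ‖a‖ ^ (r - 1) := by positivity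
  have hT : 0 ≤ ‖b‖ ^ (r - 1) := by positivity
  have hTS : ‖b‖ ^ (r - 1) ≤ ‖a‖ ^ (r - 1) :=
    Real.rpow_le_rpow (norm_nonneg b) hab (by linarith)
  have hc := real_inner_le_norm a b
  have e1 := norm_sub_sq_real a b
  have e2 := norm_sub_sq_real ((‖a‖ ^ (r - 1)) • a) ((‖b‖ ^ (r - 1)) • b)
  rw [norm_smul, norm_smul, real_inner_smul_left, real_inner_smul_right, Real.norm_of_nonneg hS,
    Real.norm_of_nonneg hT] at e2
  have hb := norm_nonneg b
  generalize ‖a‖ ^ (r - 1) = S at *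
  generalize ‖b‖ ^ (r - 1) = T at *
  generalize ‖a‖ = s at *
  generalize ‖b‖ = t at *
  generalize ⟪a, b⟫ = c at *
  refine le_of_sq_le_sq ?_ (by positivity)
  have h0 : 0 ≤ S * s - T * t := sub_nonneg.2 (mul_le_mul hTS hab hb hS)
  have h1 : (S * s - T * t) ^ 2 ≤ (r * S * (s - t)) ^ 2 := pow_le_pow_left₀ h0 hlin 2
  have h2 : S * T ≤ (r * S) ^ 2 := by
    have : S ≤ r * S := le_mul_of_one_le_left hS hr
    nlinarith
  have h3 := mul_le_mul_of_nonneg_right h2 (sub_nonneg.2 hc)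
  rw [e2, mul_pow (r * S) ‖a - b‖, e1]
  linarith

lemma norm_forchheimer_sub_le {E : Type*} [NormedAddCommGroup E] [InnerProductSpace ℝ E]
    {r : ℝ} (hr : 1 ≤ r) (a b : E) :
    ‖(‖a‖ ^ (r - 1)) • a - (‖b‖ ^ (r - 1)) • b‖ ≤ r * (‖a‖ + ‖b‖) ^ (r - 1) * ‖a - b‖ := by
  have hr' : 0 ≤ r - 1 := by linarith
  have ha := norm_nonneg a
  have hb := norm_nonneg b
  rcases le_total ‖b‖ ‖a‖ with h | h
  · refine (norm_forchheimer_sub_le_of_norm_le hr h).trans ?_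
    gcongr
    linarith
  · rw [norm_sub_rev, norm_sub_rev a b]
    refine (norm_forchheimer_sub_le_of_norm_le hr h).trans ?_
    gcongr
    linarith

/-- Three-function Hölder inequality with exponents `(r-1)/(r+1)`, `1/(r+1)`, `1/(r+1)`; the first
exponent vanishes when `r = 1`. -/
lemma holder_three {α : Type*} [MeasurableSpace α] {μ : Measure α} {r : ℝ} (hr : 1 ≤ r)
    {f g h : α → ℝ} (hf : Measurable f) (hg : Measurable g) (hh : Measurable h)
    (hf0 : ∀ x, 0 ≤ f x) (hg0 : ∀ x, 0 ≤ g x) (hh0 : ∀ x, 0 ≤ h x)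
    (hfi : Integrable (fun x => f x ^ (r + 1)) μ) (hgi : Integrable (fun x => g x ^ (r + 1)) μ)
    (hhi : Integrable (fun x => h x ^ (r + 1)) μ) :
    Integrable (fun x => f x ^ (r - 1) * g x * h x) μ ∧
    ∫ x, f x ^ (r - 1) * g x * h x ∂μ ≤ ((∫ x, f x ^ (r + 1) ∂μ) ^ (1 / (r + 1))) ^ (r - 1)
      * (∫ x, g x ^ (r + 1) ∂μ) ^ (1 / (r + 1)) * (∫ x, h x ^ (r + 1) ∂μ) ^ (1 / (r + 1)) := by
  have hp : 0 < r + 1 := by linarith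
  have hq : 0 ≤ r - 1 := by linarith
  have hp1 : 0 ≤ 1 / (r + 1) := by positivity
  have hnn : ∀ k : α → ℝ, (∀ x, 0 ≤ k x) → 0 ≤ ∫ x, k x ^ (r + 1) ∂μ := fun k hk =>
    integral_nonneg fun x => Real.rpow_nonneg (hk x) _
  have H := ENNReal.lintegral_prod_norm_pow_le (μ := μ) (Finset.univ : Finset (Fin 3))
    (f := ![fun x => ENNReal.ofReal (f x ^ (r + 1)), fun x => ENNReal.ofReal (g x ^ (r + 1)),
      fun x => ENNReal.ofReal (h x ^ (r + 1))])
    (p := ![1 / (r + 1) * (r - 1), 1 / (r + 1), 1 / (r + 1)])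
    (by
      intro i _
      fin_cases i
      · exact (hf.pow_const _).ennreal_ofReal.aemeasurable
      · exact (hg.pow_const _).ennreal_ofReal.aemeasurable
      · exact (hh.pow_const _).ennreal_ofReal.aemeasurable)
    (by
      simp only [Fin.sum_univ_three, Matrix.cons_val_zero, Matrix.cons_val_one, Matrix.cons_val]
      field_simp
      ring)
    (by
      intro i _
      fin_cases i
      · exact mul_nonneg hp1 hq
      · exact hp1
      · exact hp1)
  simp only [Fin.prod_univ_three, Matrix.cons_val_zero, Matrix.cons_val_one, Matrix.cons_val] at H
  have key : ∀ y : ℝ, 0 ≤ y → (y ^ (r + 1)) ^ (1 / (r + 1)) = y := fun y hy => by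
    rw [one_div, Real.rpow_rpow_inv hy hp.ne']
  have hpt : ∀ x, ENNReal.ofReal (f x ^ (r + 1)) ^ (1 / (r + 1) * (r - 1))
      * ENNReal.ofReal (g x ^ (r + 1)) ^ (1 / (r + 1))
      * ENNReal.ofReal (h x ^ (r + 1)) ^ (1 / (r + 1))
      = ENNReal.ofReal (f x ^ (r - 1) * g x * h x) := fun x => by
    have h1 := hf0 x
    have h2 := hg0 x
    have h3 := hh0 x
    rw [ENNReal.rpow_mul, ENNReal.ofReal_rpow_of_nonneg (by positivity) hp1, key _ h1,
      ENNReal.ofReal_rpow_of_nonneg h1 hq, ENNReal.ofReal_rpow_of_nonneg (by positivity) hp1,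
      key _ h2, ENNReal.ofReal_rpow_of_nonneg (by positivity) hp1, key _ h3,
      ENNReal.ofReal_mul (by positivity), ENNReal.ofReal_mul (by positivity)]
  have hI : ∀ k : α → ℝ, (∀ x, 0 ≤ k x) → Integrable (fun x => k x ^ (r + 1)) μ →
      ∫⁻ x, ENNReal.ofReal (k x ^ (r + 1)) ∂μ = ENNReal.ofReal (∫ x, k x ^ (r + 1) ∂μ) :=
    fun k hk hki => (ofReal_integral_eq_lintegral_ofReal hki
      (.of_forall fun x => Real.rpow_nonneg (hk x) _)).symm
  have F0 := hnn f hf0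
  have G0 := hnn g hg0
  have H0 := hnn h hh0
  simp only [hpt] at H
  rw [hI f hf0 hfi, hI g hg0 hgi, hI h hh0 hhi, ENNReal.rpow_mul,
    ENNReal.ofReal_rpow_of_nonneg F0 hp1, ENNReal.ofReal_rpow_of_nonneg (by positivity) hq,
    ENNReal.ofReal_rpow_of_nonneg G0 hp1, ENNReal.ofReal_rpow_of_nonneg H0 hp1,
    ← ENNReal.ofReal_mul (by positivity), ← ENNReal.ofReal_mul (by positivity)] at H
  have hm : Measurable fun x => f x ^ (r - 1) * g x * h x :=
    ((hf.pow_const _).mul hg).mul hh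
  have h0 : 0 ≤ᵐ[μ] fun x => f x ^ (r - 1) * g x * h x := .of_forall fun x =>
    mul_nonneg (mul_nonneg (Real.rpow_nonneg (hf0 x) _) (hg0 x)) (hh0 x)
  have hint : Integrable (fun x => f x ^ (r - 1) * g x * h x) μ :=
    ⟨hm.aestronglyMeasurable, (hasFiniteIntegral_iff_ofReal h0).2
      (H.trans_lt ENNReal.ofReal_lt_top)⟩
  refine ⟨hint, ?_⟩
  rwa [← ofReal_integral_eq_lintegral_ofReal hint h0,
    ENNReal.ofReal_le_ofReal_iff (by positivity)] at H

/-- Local Lipschitz estimate (2.13) of the paper for the duality pairing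
`⟨C(u) − C(v), w⟩` between `L^{(r+1)/r}` and `L^{r+1}`, where `C(u) = |u|^{r-1}u`. -/
theorem forchheimer_duality_lipschitz
    (d : ℕ) (hd : 1 ≤ d) (O : Set (EuclideanSpace ℝ (Fin d))) (hO : MeasurableSet O)
    (r : ℝ) (hr : 1 ≤ r)
    (u v w : EuclideanSpace ℝ (Fin d) → EuclideanSpace ℝ (Fin d))
    (hu : Measurable u) (hv : Measurable v) (hw : Measurable w)
    (hur : IntegrableOn (fun x => ‖u x‖ ^ (r + 1)) O)
    (hvr : IntegrableOn (fun x => ‖v x‖ ^ (r + 1)) O)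
    (hwr : IntegrableOn (fun x => ‖w x‖ ^ (r + 1)) O) :
    IntegrableOn
      (fun x => ⟪(‖u x‖ ^ (r - 1)) • u x - (‖v x‖ ^ (r - 1)) • v x, w x⟫) O ∧
    |∫ x in O, ⟪(‖u x‖ ^ (r - 1)) • u x - (‖v x‖ ^ (r - 1)) • v x, w x⟫| ≤
      r * ((∫ x in O, ‖u x‖ ^ (r + 1)) ^ (1 / (r + 1))
            + (∫ x in O, ‖v x‖ ^ (r + 1)) ^ (1 / (r + 1))) ^ (r - 1)
        * (∫ x in O, ‖u x - v x‖ ^ (r + 1)) ^ (1 / (r + 1))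
        * (∫ x in O, ‖w x‖ ^ (r + 1)) ^ (1 / (r + 1)) := by
  have hp : 0 < r + 1 := by linarith
  have hq : 0 ≤ r - 1 := by linarith
  have hP0 : ENNReal.ofReal (r + 1) ≠ 0 := by simpa using hp
  have hPt : ENNReal.ofReal (r + 1) ≠ ⊤ := ENNReal.ofReal_ne_top
  have hPr : (ENNReal.ofReal (r + 1)).toReal = r + 1 := ENNReal.toReal_ofReal hp.le
  have hP1 : 1 ≤ ENNReal.ofReal (r + 1) := by
    rw [ENNReal.one_le_ofReal]
    linarith
  have hmem : ∀ {F : Type} [NormedAddCommGroup F] {k : EuclideanSpace ℝ (Fin d) → F},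
      AEStronglyMeasurable k (volume.restrict O) →
      (IntegrableOn (fun x => ‖k x‖ ^ (r + 1)) O ↔
        MemLp k (ENNReal.ofReal (r + 1)) (volume.restrict O)) := fun {F} _ {k} hk => by
    rw [← integrable_norm_rpow_iff hk hP0 hPt, hPr, IntegrableOn]
  have hU := (hmem hu.aestronglyMeasurable).1 hur
  have hV := (hmem hv.aestronglyMeasurable).1 hvr
  have hUV := (hmem (hu.sub hv).aestronglyMeasurable).2 (hU.sub hV)
  have hS := hU.norm.add hV.norm
  have hSi := (hmem hS.1).2 hS
  have hnorm : ∀ x, ‖((fun x => ‖u x‖) + fun x => ‖v x‖) x‖ = ‖u x‖ + ‖v x‖ := fun x =>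
    Real.norm_of_nonneg (by simp only [Pi.add_apply]; positivity)
  simp only [hnorm] at hSi
  simp only [Pi.sub_apply] at hUV
  have hMink : (∫ x in O, (‖u x‖ + ‖v x‖) ^ (r + 1)) ^ (1 / (r + 1))
      ≤ (∫ x in O, ‖u x‖ ^ (r + 1)) ^ (1 / (r + 1))
        + (∫ x in O, ‖v x‖ ^ (r + 1)) ^ (1 / (r + 1)) := by
    have h := lpNorm_add_le (g := fun x => ‖v x‖) hU.norm hP1
    rw [lpNorm_eq_integral_norm_rpow_toReal hP0 hPt hS.1,
      lpNorm_eq_integral_norm_rpow_toReal hP0 hPt hU.norm.1,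
      lpNorm_eq_integral_norm_rpow_toReal hP0 hPt hV.norm.1, hPr] at h
    simpa only [hnorm, norm_norm, one_div] using h
  obtain ⟨hint, hle⟩ := holder_three (μ := volume.restrict O) hr
    (f := fun x => ‖u x‖ + ‖v x‖) (g := fun x => ‖u x - v x‖) (h := fun x => ‖w x‖)
    (hu.norm.add hv.norm) (hu.sub hv).norm hw.norm
    (fun x => by positivity) (fun x => norm_nonneg _) (fun x => norm_nonneg _) hSi hUV hwr
  have hdom : ∀ x, ‖⟪(‖u x‖ ^ (r - 1)) • u x - (‖v x‖ ^ (r - 1)) • v x, w x⟫‖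
      ≤ r * ((‖u x‖ + ‖v x‖) ^ (r - 1) * ‖u x - v x‖ * ‖w x‖) := fun x => by
    refine (norm_inner_le_norm _ _).trans ?_
    have := mul_le_mul_of_nonneg_right (norm_forchheimer_sub_le hr (u x) (v x))
      (norm_nonneg (w x))
    linarith
  have hmeas : Measurable
      (fun x => ⟪(‖u x‖ ^ (r - 1)) • u x - (‖v x‖ ^ (r - 1)) • v x, w x⟫) :=
    (((hu.norm.pow_const _).smul hu).sub ((hv.norm.pow_const _).smul hv)).inner hw
  refine ⟨(hint.const_mul r).mono' hmeas.aestronglyMeasurable (.of_forall hdom), ?_⟩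
  have hnn : ∀ k : EuclideanSpace ℝ (Fin d) → ℝ, (∀ x, 0 ≤ k x) →
      0 ≤ (∫ x in O, k x ^ (r + 1)) ^ (1 / (r + 1)) := fun k hk =>
    Real.rpow_nonneg (integral_nonneg fun x => Real.rpow_nonneg (hk x) _) _
  have hN := hnn (fun x => ‖u x‖ + ‖v x‖) fun x => by positivity
  have hB := hnn (fun x => ‖u x - v x‖) fun x => norm_nonneg _
  have hC := hnn (fun x => ‖w x‖) fun x => norm_nonneg _
  calc _ ≤ ∫ x in O, r * ((‖u x‖ + ‖v x‖) ^ (r - 1) * ‖u x - v x‖ * ‖w x‖) :=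
        norm_integral_le_of_norm_le (hint.const_mul r) (.of_forall hdom)
    _ = r * ∫ x in O, (‖u x‖ + ‖v x‖) ^ (r - 1) * ‖u x - v x‖ * ‖w x‖ := integral_const_mul _ _
    _ ≤ r * (((∫ x in O, (‖u x‖ + ‖v x‖) ^ (r + 1)) ^ (1 / (r + 1))) ^ (r - 1)
        * (∫ x in O, ‖u x - v x‖ ^ (r + 1)) ^ (1 / (r + 1))
        * (∫ x in O, ‖w x‖ ^ (r + 1)) ^ (1 / (r + 1))) := by gcongr
    _ ≤ _ := by
      rw [mul_assoc r, mul_assoc r]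
      gcongr
end

section
/- Let d ≥ 1, let O ⊆ ℝ^d be a Lebesgue-measurable set, let r ≥ 1 be real, and let u, v : O → ℝ^d be measurable with ‖u‖_{L^{r+1}} < ∞ and ‖v‖_{L^{r+1}} < ∞. Then ‖ |u|^{r−1}u − |v|^{r−1}v ‖_{L^{(r+1)/r}} ≤ r (‖u‖_{L^{r+1}} + ‖v‖_{L^{r+1}})^{r−1} ‖u − v‖_{L^{r+1}} (with the convention x^0 = 1 when r = 1); in particular the map u ↦ |u|^{r−1}u is locally Lipschitz from L^{r+1}(O;ℝ^d) to L^{(r+1)/r}(O;ℝ^d). -/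
/-!
The estimate follows from a pointwise bound, Hölder's inequality and Minkowski's inequality.

Pointwise (`norm_rpow_smul_sub_le`), `||a|^{r-1} a - |b|^{r-1} b| ≤ r (|a| + |b|)^{r-1} |a - b|`.
Take `|b| ≤ |a|` and split the difference as `|a|^{r-1} (a - b) + (|a|^{r-1} - |b|^{r-1}) b`; the
second term is at most `(r-1) |a|^{r-1} (|a| - |b|)` in norm, which is a rearrangement of
Bernoulli's inequality for `|b| / |a|` with exponent `r` (`rpow_sub_rpow_mul_le`).

For `r > 1`, Hölder with the conjugate exponents `r/(r-1)` and `r` bounds the `L^{(r+1)/r}` norm of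
`(|u| + |v|)^{r-1} |u - v|` by `‖|u| + |v|‖_{L^{r+1}}^{r-1} ‖u - v‖_{L^{r+1}}`
(`integral_rpow_mul_rpow_le`), and Minkowski (`integral_add_rpow_le`) splits `|u| + |v|`.
-/

open MeasureTheory

/-- For `a > 0`, after division by `a ^ (s + 1)` this is Bernoulli's inequality
`1 + (s + 1) (t - 1) ≤ t ^ (s + 1)` at `t = b / a`. -/
theorem rpow_sub_rpow_mul_le {a b s : ℝ} (hb : 0 ≤ b) (hab : b ≤ a) (hs : 0 ≤ s) :
    (a ^ s - b ^ s) * b ≤ s * a ^ s * (a - b) := by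
  rcases hb.eq_or_lt with rfl | hb
  · have := Real.rpow_nonneg hab s
    simp only [mul_zero, sub_zero]
    positivity
  have ha : 0 < a := hb.trans_le hab
  have key := one_add_mul_self_le_rpow_one_add (s := b / a - 1) (p := s + 1)
    (by have : 0 ≤ b / a := by positivity
        linarith) (by linarith)
  rw [add_sub_cancel, Real.div_rpow hb.le ha.le, Real.rpow_add_one hb.ne',
    Real.rpow_add_one ha.ne'] at key
  have has : 0 < a ^ s := Real.rpow_pos_of_pos ha s
  have h2 := mul_le_mul_of_nonneg_right key (mul_pos has ha).le
  rw [div_mul_cancel₀ _ (mul_pos has ha).ne'] at h2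
  have h3 : (1 + (s + 1) * (b / a - 1)) * (a ^ s * a) = a ^ s * (a + (s + 1) * (b - a)) := by
    field_simp
  rw [h3] at h2
  nlinarith

theorem norm_rpow_smul_sub_le {E : Type*} [NormedAddCommGroup E] [NormedSpace ℝ E]
    {r : ℝ} (hr : 1 ≤ r) (a b : E) :
    ‖(‖a‖ ^ (r - 1)) • a - (‖b‖ ^ (r - 1)) • b‖ ≤
      r * ((‖a‖ + ‖b‖) ^ (r - 1) * ‖a - b‖) := by
  wlog hab : ‖b‖ ≤ ‖a‖ generalizing a b
  · have := this b a (le_of_not_ge hab)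
    rwa [norm_sub_rev, add_comm, norm_sub_rev b a] at this
  have hs : 0 ≤ r - 1 := by linarith
  have hmono : ‖b‖ ^ (r - 1) ≤ ‖a‖ ^ (r - 1) := Real.rpow_le_rpow (norm_nonneg _) hab hs
  have hmono' : ‖a‖ ^ (r - 1) ≤ (‖a‖ + ‖b‖) ^ (r - 1) :=
    Real.rpow_le_rpow (norm_nonneg _) (by linarith [norm_nonneg b]) hs
  have hA : 0 ≤ ‖a‖ ^ (r - 1) := by positivity
  calc ‖(‖a‖ ^ (r - 1)) • a - (‖b‖ ^ (r - 1)) • b‖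
      = ‖(‖a‖ ^ (r - 1)) • (a - b) + (‖a‖ ^ (r - 1) - ‖b‖ ^ (r - 1)) • b‖ := by
        congr 1; module
    _ ≤ ‖a‖ ^ (r - 1) * ‖a - b‖ + (‖a‖ ^ (r - 1) - ‖b‖ ^ (r - 1)) * ‖b‖ := by
        refine (norm_add_le _ _).trans_eq ?_
        rw [norm_smul, norm_smul, Real.norm_of_nonneg hA, Real.norm_of_nonneg (by linarith)]
    _ ≤ ‖a‖ ^ (r - 1) * ‖a - b‖ + (r - 1) * ‖a‖ ^ (r - 1) * ‖a - b‖ := by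
        have h1 := rpow_sub_rpow_mul_le (norm_nonneg b) hab hs
        have h2 := mul_le_mul_of_nonneg_left (norm_sub_norm_le a b) (mul_nonneg hs hA)
        linarith
    _ = r * (‖a‖ ^ (r - 1) * ‖a - b‖) := by ring
    _ ≤ _ := by gcongr

theorem memLp_ofReal_iff_integrable_rpow {α E : Type*} [MeasurableSpace α] {μ : Measure α}
    [NormedAddCommGroup E] {f : α → E} (hf : AEStronglyMeasurable f μ) {p : ℝ} (hp : 0 < p) :
    MemLp f (ENNReal.ofReal p) μ ↔ Integrable (fun x => ‖f x‖ ^ p) μ := by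
  rw [← integrable_norm_rpow_iff hf (by simpa using hp) ENNReal.ofReal_ne_top,
    ENNReal.toReal_ofReal hp.le]

/-- Minkowski's inequality for real integrals of nonnegative functions. -/
theorem integral_add_rpow_le {α : Type*} [MeasurableSpace α] {μ : Measure α} {f g : α → ℝ}
    {p : ℝ} (hp : 1 ≤ p) (hf0 : ∀ x, 0 ≤ f x) (hg0 : ∀ x, 0 ≤ g x)
    (hf : MemLp f (ENNReal.ofReal p) μ) (hg : MemLp g (ENNReal.ofReal p) μ) :
    (∫ x, (f x + g x) ^ p ∂μ) ^ (1 / p) ≤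
      (∫ x, f x ^ p ∂μ) ^ (1 / p) + (∫ x, g x ^ p ∂μ) ^ (1 / p) := by
  have hp0 : 0 < p := by linarith
  have hne : ENNReal.ofReal p ≠ 0 := by simpa using hp0
  have h := eLpNorm_add_le hf.1 hg.1 (ENNReal.one_le_ofReal.2 hp)
  have hI : ∀ k : α → ℝ, 0 ≤ (∫ x, ‖k x‖ ^ p ∂μ) ^ p⁻¹ := fun k =>
    Real.rpow_nonneg (integral_nonneg fun x => by positivity) _
  rw [(hf.add hg).eLpNorm_eq_integral_rpow_norm hne ENNReal.ofReal_ne_top,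
    hf.eLpNorm_eq_integral_rpow_norm hne ENNReal.ofReal_ne_top,
    hg.eLpNorm_eq_integral_rpow_norm hne ENNReal.ofReal_ne_top,
    ENNReal.toReal_ofReal hp0.le, ← ENNReal.ofReal_add (hI f) (hI g),
    ENNReal.ofReal_le_ofReal_iff (add_nonneg (hI f) (hI g))] at h
  simpa [abs_of_nonneg, hf0, hg0, add_nonneg] using h

/-- Hölder's inequality with the exponents `r/(r-1)` and `r`, giving
`‖w^{r-1} h‖_{(r+1)/r} ≤ ‖w‖_{r+1}^{r-1} ‖h‖_{r+1}`; the integrability of the left side is included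
so that it can serve as a dominating function. -/
theorem integral_rpow_mul_rpow_le {α : Type*} [MeasurableSpace α] {μ : Measure α} {w h : α → ℝ}
    {r : ℝ} (hr : 1 < r) (hw0 : ∀ x, 0 ≤ w x) (hh0 : ∀ x, 0 ≤ h x)
    (hw : MemLp w (ENNReal.ofReal (r + 1)) μ) (hh : MemLp h (ENNReal.ofReal (r + 1)) μ) :
    Integrable (fun x => (w x ^ (r - 1) * h x) ^ ((r + 1) / r)) μ ∧
    (∫ x, (w x ^ (r - 1) * h x) ^ ((r + 1) / r) ∂μ) ^ (r / (r + 1)) ≤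
      ((∫ x, w x ^ (r + 1) ∂μ) ^ (1 / (r + 1))) ^ (r - 1) *
        (∫ x, h x ^ (r + 1) ∂μ) ^ (1 / (r + 1)) := by
  have hr0 : 0 < r := by linarith
  have hr1 : 0 < r - 1 := by linarith
  have hr2 : 0 < r + 1 := by linarith
  have hpq : (r / (r - 1)).HolderConjugate r := by
    have := (Real.HolderConjugate.conjExponent hr).symm
    simpa [Real.conjExponent] using this
  have hF0 : ∀ x, 0 ≤ w x ^ ((r - 1) * ((r + 1) / r)) := fun x => Real.rpow_nonneg (hw0 x) _
  have hG0 : ∀ x, 0 ≤ h x ^ ((r + 1) / r) := fun x => Real.rpow_nonneg (hh0 x) _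
  have hFpow : ∀ x, (w x ^ ((r - 1) * ((r + 1) / r))) ^ (r / (r - 1)) = w x ^ (r + 1) := by
    intro x
    rw [← Real.rpow_mul (hw0 x)]
    congr 1
    field_simp
  have hGpow : ∀ x, (h x ^ ((r + 1) / r)) ^ r = h x ^ (r + 1) := by
    intro x
    rw [← Real.rpow_mul (hh0 x)]
    congr 1
    field_simp
  have hF : MemLp (fun x => w x ^ ((r - 1) * ((r + 1) / r))) (ENNReal.ofReal (r / (r - 1))) μ := by
    rw [memLp_ofReal_iff_integrable_rpow
      (hw.1.aemeasurable.pow_const _).aestronglyMeasurable hpq.pos]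
    have := (memLp_ofReal_iff_integrable_rpow hw.1 hr2).1 hw
    simpa only [Real.norm_of_nonneg (hF0 _), Real.norm_of_nonneg (hw0 _), hFpow] using this
  have hG : MemLp (fun x => h x ^ ((r + 1) / r)) (ENNReal.ofReal r) μ := by
    rw [memLp_ofReal_iff_integrable_rpow
      (hh.1.aemeasurable.pow_const _).aestronglyMeasurable hr0]
    have := (memLp_ofReal_iff_integrable_rpow hh.1 hr2).1 hh
    simpa only [Real.norm_of_nonneg (hG0 _), Real.norm_of_nonneg (hh0 _), hGpow] using this
  have hprod : ∀ x, (w x ^ (r - 1) * h x) ^ ((r + 1) / r) =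
      w x ^ ((r - 1) * ((r + 1) / r)) * h x ^ ((r + 1) / r) := by
    intro x
    rw [Real.mul_rpow (Real.rpow_nonneg (hw0 x) _) (hh0 x), ← Real.rpow_mul (hw0 x)]
  simp only [hprod]
  have : (ENNReal.ofReal (r / (r - 1))).HolderConjugate (ENNReal.ofReal r) := hpq.ennrealOfReal
  refine ⟨hF.integrable_mul hG, ?_⟩
  have key := integral_mul_le_Lp_mul_Lq_of_nonneg hpq (Filter.Eventually.of_forall hF0)
    (Filter.Eventually.of_forall hG0) hF hG
  simp only [hFpow, hGpow] at key
  have hW0 : 0 ≤ ∫ x, w x ^ (r + 1) ∂μ := integral_nonneg fun x => Real.rpow_nonneg (hw0 x) _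
  have hH0 : 0 ≤ ∫ x, h x ^ (r + 1) ∂μ := integral_nonneg fun x => Real.rpow_nonneg (hh0 x) _
  refine (Real.rpow_le_rpow (integral_nonneg fun x => mul_nonneg (hF0 x) (hG0 x)) key
    (by positivity)).trans_eq ?_
  rw [Real.mul_rpow (Real.rpow_nonneg hW0 _) (Real.rpow_nonneg hH0 _), ← Real.rpow_mul hW0,
    ← Real.rpow_mul hH0, ← Real.rpow_mul hW0]
  congr 2 <;> field_simp

/-- The Forchheimer nonlinearity `C(u) = |u|^{r-1}u` is locally Lipschitz from
`L^{r+1}(O;ℝ^d)` to `L^{(r+1)/r}(O;ℝ^d)` with explicit constant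
`r (‖u‖_{L^{r+1}} + ‖v‖_{L^{r+1}})^{r-1}` (Section 2 of the paper). -/
theorem forchheimer_locally_lipschitz
    (d : ℕ) (hd : 1 ≤ d) (O : Set (EuclideanSpace ℝ (Fin d))) (hO : MeasurableSet O)
    (r : ℝ) (hr : 1 ≤ r)
    (u v : EuclideanSpace ℝ (Fin d) → EuclideanSpace ℝ (Fin d))
    (hu : Measurable u) (hv : Measurable v)
    (hur : IntegrableOn (fun x => ‖u x‖ ^ (r + 1)) O)
    (hvr : IntegrableOn (fun x => ‖v x‖ ^ (r + 1)) O) :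
    (∫ x in O, ‖(‖u x‖ ^ (r - 1)) • u x - (‖v x‖ ^ (r - 1)) • v x‖ ^ ((r + 1) / r))
        ^ (r / (r + 1)) ≤
      r * ((∫ x in O, ‖u x‖ ^ (r + 1)) ^ (1 / (r + 1))
            + (∫ x in O, ‖v x‖ ^ (r + 1)) ^ (1 / (r + 1))) ^ (r - 1)
        * (∫ x in O, ‖u x - v x‖ ^ (r + 1)) ^ (1 / (r + 1)) := by
  rcases hr.eq_or_lt with rfl | hr_lt
  -- For `r = 1` the claim is an equality; the Hölder exponent `r/(r-1)` would be infinite.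
  · norm_num
  have hr0 : 0 < r := by linarith
  have hr2 : 0 < r + 1 := by linarith
  have huL := (memLp_ofReal_iff_integrable_rpow hu.aestronglyMeasurable hr2).2 hur
  have hvL := (memLp_ofReal_iff_integrable_rpow hv.aestronglyMeasurable hr2).2 hvr
  obtain ⟨hint, hholder⟩ := integral_rpow_mul_rpow_le hr_lt
    (fun x => add_nonneg (norm_nonneg (u x)) (norm_nonneg (v x)))
    (fun x => norm_nonneg (u x - v x)) (huL.norm.add hvL.norm) (huL.sub hvL).norm
  have hmink := integral_add_rpow_le (by linarith : (1 : ℝ) ≤ r + 1)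
    (fun x => norm_nonneg (u x)) (fun x => norm_nonneg (v x)) huL.norm hvL.norm
  have hI0 : 0 ≤ ∫ x in O, ((‖u x‖ + ‖v x‖) ^ (r - 1) * ‖u x - v x‖) ^ ((r + 1) / r) :=
    integral_nonneg fun x => by positivity
  have hpt : ∀ x, ‖(‖u x‖ ^ (r - 1)) • u x - (‖v x‖ ^ (r - 1)) • v x‖ ^ ((r + 1) / r) ≤
      r ^ ((r + 1) / r) * ((‖u x‖ + ‖v x‖) ^ (r - 1) * ‖u x - v x‖) ^ ((r + 1) / r) := by
    intro x
    rw [← Real.mul_rpow hr0.le (by positivity)]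
    exact Real.rpow_le_rpow (norm_nonneg _) (norm_rpow_smul_sub_le hr _ _) (by positivity)
  have hmono := integral_mono_of_nonneg (μ := volume.restrict O)
    (Filter.Eventually.of_forall fun x => by positivity)
    (hint.const_mul (r ^ ((r + 1) / r))) (Filter.Eventually.of_forall hpt)
  rw [integral_const_mul] at hmono
  have hexp : (r + 1) / r * (r / (r + 1)) = 1 := by field_simp
  refine (Real.rpow_le_rpow (integral_nonneg fun x => by positivity) hmono
    (by positivity)).trans ?_
  rw [Real.mul_rpow (by positivity) hI0, ← Real.rpow_mul hr0.le, hexp, Real.rpow_one, mul_assoc]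
  refine mul_le_mul_of_nonneg_left (hholder.trans ?_) hr0.le
  refine mul_le_mul_of_nonneg_right (Real.rpow_le_rpow ?_ hmink (by linarith)) ?_
  · exact Real.rpow_nonneg (integral_nonneg fun x => by positivity) _
  · exact Real.rpow_nonneg (integral_nonneg fun x => by positivity) _
end

section
/- Let d ≥ 1, let r ≥ 3 be real, let u : ℝ^d → ℝ^d be measurable with ‖u‖_{L²} < ∞ and ‖u‖_{L^{r+1}} < ∞, and let w : ℝ^d → ℝ^d be differentiable with ‖∇w‖_{L²} < ∞. Then |b(u, w, u)| ≤ ‖u‖_{L^{r+1}}^{(r+1)/(r−1)} ‖u‖_{L²}^{(r−3)/(r−1)} ‖∇w‖_{L²} (with the convention x^0 = 1 when r = 3). -/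
/-!
By the Cauchy–Schwarz inequality in the finite sums, the integrand is bounded pointwise by
`‖u‖² |∇w| = (‖u‖ ^ (r + 1)) ^ (1 / (r - 1)) (‖u‖²) ^ ((r - 3) / (2 (r - 1))) (|∇w|²) ^ (1 / 2)`.
The three exponents are nonnegative with sum `1`, so one application of Hölder's inequality for
three functions does the work of both the two-function Hölder estimate and the interpolation of
`L ^ (2 (r + 1) / (r - 1))` between `L²` and `L ^ (r + 1)`; it holds for `r = 3` as well, where the
exponent of `‖u‖²` vanishes.
-/

open MeasureTheory

/-- Hölder's inequality for three functions, for the Bochner integral. No integrability of `f` is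
needed, since its integral is `0` otherwise. -/
lemma abs_integral_le_of_abs_le_rpow_mul {α : Type*} [MeasurableSpace α] {μ : Measure α}
    {f F H K : α → ℝ} {a b c : ℝ} (ha : 0 ≤ a) (hb : 0 ≤ b) (hc : 0 ≤ c) (habc : a + b + c = 1)
    (hF : Integrable F μ) (hH : Integrable H μ) (hK : Integrable K μ)
    (hF0 : ∀ x, 0 ≤ F x) (hH0 : ∀ x, 0 ≤ H x) (hK0 : ∀ x, 0 ≤ K x)
    (hf : ∀ x, |f x| ≤ F x ^ a * H x ^ b * K x ^ c) :
    |∫ x, f x ∂μ| ≤ (∫ x, F x ∂μ) ^ a * (∫ x, H x ∂μ) ^ b * (∫ x, K x ∂μ) ^ c := by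
  have iF := integral_nonneg (μ := μ) (f := F) hF0
  have iH := integral_nonneg (μ := μ) (f := H) hH0
  have iK := integral_nonneg (μ := μ) (f := K) hK0
  have key := ENNReal.lintegral_prod_norm_pow_le (μ := μ) (Finset.univ : Finset (Fin 3))
    (f := ![fun x => ENNReal.ofReal (F x), fun x => ENNReal.ofReal (H x),
      fun x => ENNReal.ofReal (K x)]) (p := ![a, b, c])
    (by
      intro i _
      fin_cases i
      · exact hF.1.aemeasurable.ennreal_ofReal
      · exact hH.1.aemeasurable.ennreal_ofReal
      · exact hK.1.aemeasurable.ennreal_ofReal)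
    (by simpa [Fin.sum_univ_three] using habc)
    (by intro i _; fin_cases i <;> simpa)
  simp only [Fin.prod_univ_three, Matrix.cons_val_zero, Matrix.cons_val_one, Matrix.cons_val]
    at key
  rw [← ofReal_integral_eq_lintegral_ofReal hF (.of_forall hF0),
    ← ofReal_integral_eq_lintegral_ofReal hH (.of_forall hH0),
    ← ofReal_integral_eq_lintegral_ofReal hK (.of_forall hK0),
    ENNReal.ofReal_rpow_of_nonneg iF ha, ENNReal.ofReal_rpow_of_nonneg iH hb,
    ENNReal.ofReal_rpow_of_nonneg iK hc, ← ENNReal.ofReal_mul (by positivity),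
    ← ENNReal.ofReal_mul (by positivity)] at key
  have h1 := norm_integral_le_lintegral_norm (μ := μ) f
  rw [Real.norm_eq_abs] at h1
  refine h1.trans (ENNReal.toReal_le_of_le_ofReal (by positivity) (le_trans ?_ key))
  refine lintegral_mono fun x => ?_
  have xF := hF0 x
  have xH := hH0 x
  have xK := hK0 x
  rw [ENNReal.ofReal_rpow_of_nonneg xF ha, ENNReal.ofReal_rpow_of_nonneg xH hb,
    ENNReal.ofReal_rpow_of_nonneg xK hc, ← ENNReal.ofReal_mul (by positivity),
    ← ENNReal.ofReal_mul (by positivity)]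
  exact ENNReal.ofReal_le_ofReal (hf x)

lemma abs_sum_mul_mul_le {d : ℕ} (v : EuclideanSpace ℝ (Fin d)) (A : Fin d → Fin d → ℝ) :
    |∑ i, ∑ j, v i * A i j * v j| ≤ ‖v‖ ^ 2 * (∑ i, ∑ j, A i j ^ 2) ^ ((1 : ℝ) / 2) := by
  rw [← Real.sqrt_eq_rpow]
  refine abs_le_of_sq_le_sq ?_ (by positivity)
  rw [mul_pow, Real.sq_sqrt (by positivity)]
  -- Cauchy–Schwarz over pairs of indices, where `∑ (v i * v j)² = ‖v‖⁴`.
  have h := Finset.sum_mul_sq_le_sq_mul_sq (Finset.univ : Finset (Fin d × Fin d))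
    (fun p => v p.1 * v p.2) (fun p => A p.1 p.2)
  simp only [Fintype.sum_prod_type] at h
  have hv : ∑ i, ∑ j, (v i * v j) ^ 2 = (‖v‖ ^ 2) ^ 2 := by
    rw [EuclideanSpace.real_norm_sq_eq, sq (∑ i, v i ^ 2), Finset.sum_mul_sum]
    simp only [mul_pow]
  rw [hv] at h
  simpa only [mul_right_comm] using h

/-- Estimate (2.12)/(2.13a) of the paper:
`|b(u, w, u)| ≤ ‖u‖_{L^{r+1}}^{(r+1)/(r−1)} ‖u‖_{L²}^{(r−3)/(r−1)} ‖∇w‖_{L²}` for `r ≥ 3`. -/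
theorem trilinear_form_interpolation_estimate
    (d : ℕ) (hd : 1 ≤ d) (r : ℝ) (hr : 3 ≤ r)
    (u w : EuclideanSpace ℝ (Fin d) → EuclideanSpace ℝ (Fin d))
    (hu : Measurable u) (hw : Differentiable ℝ w)
    (hu2 : Integrable (fun x => ‖u x‖ ^ 2))
    (hur : Integrable (fun x => ‖u x‖ ^ (r + 1)))
    (hwg : Integrable
      (fun x => ∑ i, ∑ j, (fderiv ℝ w x (EuclideanSpace.single i 1) j) ^ 2)) :
    |∫ x, ∑ i, ∑ j, u x i * fderiv ℝ w x (EuclideanSpace.single i 1) j * u x j| ≤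
      ((∫ x, ‖u x‖ ^ (r + 1)) ^ (1 / (r + 1))) ^ ((r + 1) / (r - 1))
        * ((∫ x, ‖u x‖ ^ 2) ^ ((1 : ℝ) / 2)) ^ ((r - 3) / (r - 1))
        * (∫ x, ∑ i, ∑ j, (fderiv ℝ w x (EuclideanSpace.single i 1) j) ^ 2)
            ^ ((1 : ℝ) / 2) := by
  have hr1 : 0 < r - 1 := by linarith
  have iF : 0 ≤ ∫ x, ‖u x‖ ^ (r + 1) := integral_nonneg fun x => by positivity
  have iH : 0 ≤ ∫ x, ‖u x‖ ^ 2 := integral_nonneg fun x => by positivity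
  rw [← Real.rpow_mul iF, ← Real.rpow_mul iH]
  have e1 : 1 / (r + 1) * ((r + 1) / (r - 1)) = 1 / (r - 1) := by
    have : r + 1 ≠ 0 := by linarith
    field_simp
  rw [e1]
  have hb : 0 ≤ 1 / 2 * ((r - 3) / (r - 1)) :=
    mul_nonneg (by norm_num) (div_nonneg (by linarith) hr1.le)
  refine abs_integral_le_of_abs_le_rpow_mul (by positivity) hb (by norm_num)
    (by field_simp; ring) hur hu2 hwg (fun x => by positivity) (fun x => by positivity)
    (fun x => by positivity) fun x => ?_
  refine (abs_sum_mul_mul_le (u x) _).trans_eq ?_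
  congr 1
  rw [← Real.rpow_natCast, ← Real.rpow_mul (norm_nonneg _), ← Real.rpow_mul (norm_nonneg _),
    ← Real.rpow_add_of_nonneg (norm_nonneg _)
      (mul_nonneg (by linarith) (by positivity)) (mul_nonneg (by positivity) hb)]
  congr 1
  push_cast
  field_simp
  ring
end

section
/- Let d ≥ 1, let r > 3 be real, let u, v : ℝ^d → ℝ^d be measurable with ‖u‖_{L²}, ‖u‖_{L^{r+1}}, ‖v‖_{L²}, ‖v‖_{L^{r+1}} all finite, and let w : ℝ^d → ℝ^d be differentiable with ‖∇w‖_{L²} < ∞. Then |b(u, w, u) − b(v, w, v)| ≤ (‖u‖_{L²}^{(r−3)/(r−1)} ‖u‖_{L^{r+1}}^{2/(r−1)} + ‖v‖_{L²}^{(r−3)/(r−1)} ‖v‖_{L^{r+1}}^{2/(r−1)}) ‖u − v‖_{L^{r+1}} ‖∇w‖_{L²}. -/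
open MeasureTheory

/-! The form is quadratic in its outer slots, so
`b(u,w,u) - b(v,w,v) = b(u - v, w, u) + b(v, w, u - v)`. The Cauchy–Schwarz inequality for the
Frobenius norm bounds the integrand of this difference pointwise by
`(‖u‖ + ‖v‖) ‖u - v‖ ‖∇w‖` (`abs_form_sub_form_le`). With `θ = (r - 3) / (r - 1)`, so that
`1 - θ = 2 / (r - 1)`, write `‖u‖ = ‖u‖ ^ θ * ‖u‖ ^ (1 - θ)` and apply Hölder's inequality to four
factors with the exponents `2 / θ`, `(r + 1) / (1 - θ)`, `r + 1` and `2`, whose reciprocals add up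
to `1` (`four_factor_holder`). This performs the interpolation of the `L ^ (2 (r + 1) / (r - 1))`
norm between `L²` and `L ^ (r + 1)` and the Hölder estimate in a single step. The same lemma with
`u` in place of `u - v` shows that the integrand of `b(u,w,u)` is integrable, so that the
integrals may be subtracted. -/

/-- Hölder's inequality for finitely many nonnegative integrable functions, with weights adding
up to `1`, together with the integrability of the weighted geometric mean. -/
lemma integral_prod_rpow_le {α ι : Type*} [MeasurableSpace α] {μ : Measure α} (s : Finset ι)
    (f : ι → α → ℝ) (hf : ∀ i ∈ s, Integrable (f i) μ) (hf0 : ∀ i x, 0 ≤ f i x)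
    (p : ι → ℝ) (hp : ∑ i ∈ s, p i = 1) (hp0 : ∀ i ∈ s, 0 ≤ p i) :
    Integrable (fun x => ∏ i ∈ s, f i x ^ p i) μ ∧
      ∫ x, ∏ i ∈ s, f i x ^ p i ∂μ ≤ ∏ i ∈ s, (∫ x, f i x ∂μ) ^ p i := by
  have hpos : ∀ x, 0 ≤ ∏ i ∈ s, f i x ^ p i := fun x =>
    Finset.prod_nonneg fun i _ => Real.rpow_nonneg (hf0 i x) _
  have hmeas : AEStronglyMeasurable (fun x => ∏ i ∈ s, f i x ^ p i) μ :=
    (Finset.aemeasurable_fun_prod s fun i hi =>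
      (hf i hi).aemeasurable.pow_const (p i)).aestronglyMeasurable
  have key := ENNReal.lintegral_prod_norm_pow_le (μ := μ) s
    (f := fun i x => ENNReal.ofReal (f i x))
    (fun i hi => (hf i hi).aemeasurable.ennreal_ofReal) hp hp0
  have e1 : ∀ x, ∏ i ∈ s, ENNReal.ofReal (f i x) ^ p i
      = ENNReal.ofReal (∏ i ∈ s, f i x ^ p i) := fun x => by
    rw [ENNReal.ofReal_prod_of_nonneg fun i _ => Real.rpow_nonneg (hf0 i x) _]
    exact Finset.prod_congr rfl fun i hi => ENNReal.ofReal_rpow_of_nonneg (hf0 i x) (hp0 i hi)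
  have e2 : ∏ i ∈ s, (∫⁻ x, ENNReal.ofReal (f i x) ∂μ) ^ p i
      = ENNReal.ofReal (∏ i ∈ s, (∫ x, f i x ∂μ) ^ p i) := by
    rw [ENNReal.ofReal_prod_of_nonneg fun i _ => Real.rpow_nonneg (integral_nonneg (hf0 i)) _]
    refine Finset.prod_congr rfl fun i hi => ?_
    rw [← ofReal_integral_eq_lintegral_ofReal (hf i hi) (ae_of_all _ (hf0 i)),
      ENNReal.ofReal_rpow_of_nonneg (integral_nonneg (hf0 i)) (hp0 i hi)]
  simp only [e1] at key
  rw [e2] at key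
  have hint : Integrable (fun x => ∏ i ∈ s, f i x ^ p i) μ :=
    ⟨hmeas, (hasFiniteIntegral_iff_ofReal (ae_of_all _ hpos)).2
      (key.trans_lt ENNReal.ofReal_lt_top)⟩
  refine ⟨hint, ?_⟩
  rw [← ofReal_integral_eq_lintegral_ofReal hint (ae_of_all _ hpos)] at key
  exact (ENNReal.ofReal_le_ofReal_iff (Finset.prod_nonneg fun i _ =>
    Real.rpow_nonneg (integral_nonneg (hf0 i)) _)).1 key

/-- Hölder's inequality combined with interpolation between `L²` and `L ^ (r + 1)`; here `a` is
interpolated, `b` is measured in `L ^ (r + 1)` and `√g` in `L²`. -/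
lemma four_factor_holder {α : Type*} [MeasurableSpace α] {μ : Measure α} {r : ℝ} (hr : 3 < r)
    {a b g : α → ℝ} (ha : ∀ x, 0 ≤ a x) (hb : ∀ x, 0 ≤ b x) (hg : ∀ x, 0 ≤ g x)
    (ha2 : Integrable (fun x => a x ^ 2) μ) (har : Integrable (fun x => a x ^ (r + 1)) μ)
    (hbr : Integrable (fun x => b x ^ (r + 1)) μ) (hgi : Integrable g μ) :
    Integrable (fun x => a x * b x * √(g x)) μ ∧
      ∫ x, a x * b x * √(g x) ∂μ ≤
        ((∫ x, a x ^ 2 ∂μ) ^ ((1 : ℝ) / 2)) ^ ((r - 3) / (r - 1))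
          * ((∫ x, a x ^ (r + 1) ∂μ) ^ (1 / (r + 1))) ^ (2 / (r - 1))
          * (∫ x, b x ^ (r + 1) ∂μ) ^ (1 / (r + 1)) * (∫ x, g x ∂μ) ^ ((1 : ℝ) / 2) := by
  have h1 : 0 < r - 1 := by linarith
  have h2 : 0 < r + 1 := by linarith
  have h3 : 0 < r - 3 := by linarith
  have key := integral_prod_rpow_le (μ := μ) (Finset.univ : Finset (Fin 4))
    ![fun x => a x ^ 2, fun x => a x ^ (r + 1), fun x => b x ^ (r + 1), g]
    (by intro i _; fin_cases i <;> assumption)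
    (by
      intro i x
      fin_cases i
      · exact sq_nonneg _
      · exact Real.rpow_nonneg (ha x) _
      · exact Real.rpow_nonneg (hb x) _
      · exact hg x)
    ![1 / 2 * ((r - 3) / (r - 1)), 1 / (r + 1) * (2 / (r - 1)), 1 / (r + 1), 1 / 2]
    (by
      simp only [Fin.sum_univ_four, Matrix.cons_val]
      field_simp
      ring)
    (by intro i _; fin_cases i <;> simp <;> positivity)
  simp only [Fin.prod_univ_four, Matrix.cons_val] at key
  have e : ∀ x, (a x ^ 2) ^ (1 / 2 * ((r - 3) / (r - 1)))
      * (a x ^ (r + 1)) ^ (1 / (r + 1) * (2 / (r - 1))) * (b x ^ (r + 1)) ^ (1 / (r + 1))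
      * g x ^ ((1 : ℝ) / 2) = a x * b x * √(g x) := fun x => by
    have hs : (r - 3) / (r - 1) + 2 / (r - 1) = 1 := by field_simp; ring
    rw [← Real.rpow_natCast (a x) 2, ← Real.rpow_mul (ha x), ← Real.rpow_mul (ha x),
      ← Real.rpow_mul (hb x), ← Real.sqrt_eq_rpow, ← mul_assoc, ← mul_assoc,
      mul_one_div_cancel h2.ne', Real.rpow_one, one_mul]
    push_cast
    rw [mul_one_div_cancel two_ne_zero, one_mul,
      ← Real.rpow_add_of_nonneg (ha x) (by positivity) (by positivity), hs, Real.rpow_one]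
  simp only [e] at key
  rw [← Real.rpow_mul (integral_nonneg fun x => sq_nonneg _),
    ← Real.rpow_mul (integral_nonneg fun x => Real.rpow_nonneg (ha x) _)]
  exact key

/-- Cauchy–Schwarz: a bilinear form is bounded by the Frobenius norm of its matrix. -/
lemma abs_form_le {d : ℕ} (a b : EuclideanSpace ℝ (Fin d)) (G : Fin d → Fin d → ℝ) :
    |∑ i, ∑ j, a i * G i j * b j| ≤ ‖a‖ * ‖b‖ * √(∑ i, ∑ j, G i j ^ 2) := by
  have h := Finset.sum_mul_sq_le_sq_mul_sq (Finset.univ : Finset (Fin d × Fin d))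
    (fun p => a p.1 * b p.2) (fun p => G p.1 p.2)
  simp only [Fintype.sum_prod_type, mul_pow] at h
  rw [← Finset.sum_mul_sum, ← EuclideanSpace.real_norm_sq_eq,
    ← EuclideanSpace.real_norm_sq_eq] at h
  refine abs_le_of_sq_le_sq ?_ (by positivity)
  rw [mul_pow, Real.sq_sqrt (by positivity), mul_pow]
  refine le_trans (le_of_eq ?_) h
  congr 1
  exact Finset.sum_congr rfl fun i _ => Finset.sum_congr rfl fun j _ => by ring

/-- The pointwise form of `b(u,w,u) - b(v,w,v) = b(u - v, w, u) + b(v, w, u - v)`, estimated. -/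
lemma abs_form_sub_form_le {d : ℕ} (a b : EuclideanSpace ℝ (Fin d)) (G : Fin d → Fin d → ℝ) :
    |(∑ i, ∑ j, a i * G i j * a j) - ∑ i, ∑ j, b i * G i j * b j|
      ≤ ‖a‖ * ‖a - b‖ * √(∑ i, ∑ j, G i j ^ 2) + ‖b‖ * ‖a - b‖ * √(∑ i, ∑ j, G i j ^ 2) := by
  have h : (∑ i, ∑ j, a i * G i j * a j) - ∑ i, ∑ j, b i * G i j * b j
      = (∑ i, ∑ j, (a - b) i * G i j * a j) + ∑ i, ∑ j, b i * G i j * (a - b) j := by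
    simp only [← Finset.sum_sub_distrib, ← Finset.sum_add_distrib, PiLp.sub_apply]
    exact Finset.sum_congr rfl fun i _ => Finset.sum_congr rfl fun j _ => by ring
  rw [h]
  refine (abs_add_le _ _).trans (add_le_add ?_ (abs_form_le _ _ _))
  rw [mul_comm ‖a‖]
  exact abs_form_le _ _ _

/-- Local Lipschitz estimate (2.14) of the paper for the Navier–Stokes nonlinearity,
`|b(u,w,u) − b(v,w,v)| ≤ (‖u‖_{L²}^{(r−3)/(r−1)} ‖u‖_{L^{r+1}}^{2/(r−1)}
  + ‖v‖_{L²}^{(r−3)/(r−1)} ‖v‖_{L^{r+1}}^{2/(r−1)}) ‖u − v‖_{L^{r+1}} ‖∇w‖_{L²}` for `r > 3`. -/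
theorem trilinear_form_local_lipschitz
    (d : ℕ) (hd : 1 ≤ d) (r : ℝ) (hr : 3 < r)
    (u v w : EuclideanSpace ℝ (Fin d) → EuclideanSpace ℝ (Fin d))
    (hu : Measurable u) (hv : Measurable v) (hw : Differentiable ℝ w)
    (hu2 : Integrable (fun x => ‖u x‖ ^ 2))
    (hur : Integrable (fun x => ‖u x‖ ^ (r + 1)))
    (hv2 : Integrable (fun x => ‖v x‖ ^ 2))
    (hvr : Integrable (fun x => ‖v x‖ ^ (r + 1)))
    (hwg : Integrable
      (fun x => ∑ i, ∑ j, (fderiv ℝ w x (EuclideanSpace.single i 1) j) ^ 2)) :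
    |(∫ x, ∑ i, ∑ j, u x i * fderiv ℝ w x (EuclideanSpace.single i 1) j * u x j)
      - (∫ x, ∑ i, ∑ j, v x i * fderiv ℝ w x (EuclideanSpace.single i 1) j * v x j)| ≤
      (((∫ x, ‖u x‖ ^ 2) ^ ((1 : ℝ) / 2)) ^ ((r - 3) / (r - 1))
          * ((∫ x, ‖u x‖ ^ (r + 1)) ^ (1 / (r + 1))) ^ (2 / (r - 1))
        + ((∫ x, ‖v x‖ ^ 2) ^ ((1 : ℝ) / 2)) ^ ((r - 3) / (r - 1))
          * ((∫ x, ‖v x‖ ^ (r + 1)) ^ (1 / (r + 1))) ^ (2 / (r - 1)))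
        * (∫ x, ‖u x - v x‖ ^ (r + 1)) ^ (1 / (r + 1))
        * (∫ x, ∑ i, ∑ j, (fderiv ℝ w x (EuclideanSpace.single i 1) j) ^ 2)
            ^ ((1 : ℝ) / 2) := by
  have hr1 : 0 < r + 1 := by linarith
  have hg0 : ∀ x, 0 ≤ ∑ i, ∑ j, (fderiv ℝ w x (EuclideanSpace.single i 1) j) ^ 2 :=
    fun x => by positivity
  have hG : ∀ i j, Measurable fun x => fderiv ℝ w x (EuclideanSpace.single i 1) j := fun i j =>
    (EuclideanSpace.proj (𝕜 := ℝ) j).measurable.comp (measurable_fderiv_apply_const ℝ w _)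
  have hform : ∀ z : EuclideanSpace ℝ (Fin d) → EuclideanSpace ℝ (Fin d), Measurable z →
      Integrable (fun x => ‖z x‖ ^ 2) → Integrable (fun x => ‖z x‖ ^ (r + 1)) →
      Integrable fun x =>
        ∑ i, ∑ j, z x i * fderiv ℝ w x (EuclideanSpace.single i 1) j * z x j := by
    intro z hz hz2 hzr
    have hzi : ∀ i, Measurable fun x => z x i := fun i =>
      (EuclideanSpace.proj (𝕜 := ℝ) i).measurable.comp hz
    refine (four_factor_holder hr (fun x => norm_nonneg (z x)) (fun x => norm_nonneg (z x)) hg0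
      hz2 hzr hzr hwg).1.mono' ?_ (ae_of_all _ fun x => ?_)
    · exact (Finset.measurable_fun_sum _ fun i _ => Finset.measurable_fun_sum _ fun j _ =>
        ((hzi i).mul (hG i j)).mul (hzi j)).aestronglyMeasurable
    · exact abs_form_le (z x) (z x) fun i j => fderiv ℝ w x (EuclideanSpace.single i 1) j
  have hLp : ∀ z : EuclideanSpace ℝ (Fin d) → EuclideanSpace ℝ (Fin d), Measurable z →
      (Integrable (fun x => ‖z x‖ ^ (r + 1)) ↔ MemLp z (ENNReal.ofReal (r + 1))) := by
    intro z hz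
    rw [← integrable_norm_rpow_iff hz.aestronglyMeasurable (by simpa using hr1)
      ENNReal.ofReal_ne_top, ENNReal.toReal_ofReal hr1.le]
  have hsub : Integrable (fun x => ‖u x - v x‖ ^ (r + 1)) :=
    (hLp (u - v) (hu.sub hv)).2 (((hLp u hu).1 hur).sub ((hLp v hv).1 hvr))
  obtain ⟨iu, bu⟩ := four_factor_holder hr (fun x => norm_nonneg (u x))
    (fun x => norm_nonneg (u x - v x)) hg0 hu2 hur hsub hwg
  obtain ⟨iv, bv⟩ := four_factor_holder hr (fun x => norm_nonneg (v x))
    (fun x => norm_nonneg (u x - v x)) hg0 hv2 hvr hsub hwg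
  rw [← integral_sub (hform u hu hu2 hur) (hform v hv hv2 hvr), add_mul, add_mul]
  refine le_trans ?_ (add_le_add bu bv)
  rw [← integral_add iu iv, ← Real.norm_eq_abs]
  refine norm_integral_le_of_norm_le (iu.add iv) (ae_of_all _ fun x => ?_)
  exact abs_form_sub_form_le (u x) (v x) fun i j => fderiv ℝ w x (EuclideanSpace.single i 1) j
end

section
/- Let d ≥ 1, let r > 3 be real, let μ > 0 and β > 0, let z : ℝ^d → ℝ^d be continuously differentiable with compact support, and let u : ℝ^d → ℝ^d be measurable with ∫_{ℝ^d} |u(x)|^{r−1}|z(x)|² dx < ∞. Then |b(z, z, u)| = |∫_{ℝ^d} ((z·∇)z)·u dx| ≤ (μ/2) ‖∇z‖_{L²}² + (β/4) ∫_{ℝ^d} |u(x)|^{r−1}|z(x)|² dx + ζ ‖z‖_{L²}², where ζ = ((r−3)/(2μ(r−1))) (4/(βμ(r−1)))^{2/(r−3)}. -/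
/-!
The estimate holds pointwise, before integration. With `G i j = ∂ᵢ zⱼ`, Young's inequality applied to
each product `G i j * (z i * u j)` and summed over `i, j` gives
`|∑ z i * G i j * u j| ≤ (μ / 2) |G|² + |z|² |u|² / (2 μ)` (`trilinear_young`). The factor
`|u|² / (2 μ)` is at most `(β / 4) |u| ^ (r - 1) + ζ` (`sq_le_rpow_add_const`): the constant `ζ` is
exactly the maximum over `s = |u|² ≥ 0` of `s / (2 μ) - (β / 4) s ^ ((r - 1) / 2)`, and the bound is
Bernoulli's inequality at the maximiser. All three dominating terms are integrable, the first and
third because they are continuous with compact support.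
-/

open MeasureTheory

/-- Young's inequality with the optimal constant. It is the tangent-line inequality for
`s ↦ s ^ ((r - 1) / 2)` at the point `(4 / (β μ (r - 1))) ^ (2 / (r - 3))`. -/
lemma sq_le_rpow_add_const {r μ β t : ℝ} (hr : 3 < r) (hμ : 0 < μ) (hβ : 0 < β) (ht : 0 ≤ t) :
    1 / (2 * μ) * t ^ 2 ≤ β / 4 * t ^ (r - 1)
      + ((r - 3) / (2 * μ * (r - 1))) * (4 / (β * μ * (r - 1))) ^ (2 / (r - 3)) := by
  have hr1 : 0 < r - 1 := by linarith
  have hr3 : 0 < r - 3 := by linarith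
  set K : ℝ := 4 / (β * μ * (r - 1)) with hK
  have hK0 : 0 < K := by positivity
  set a : ℝ := K ^ (2 / (r - 3)) with ha
  have ha0 : 0 < a := Real.rpow_pos_of_pos hK0 _
  have hap : a ^ ((r - 1) / 2) = a * K := by
    rw [show (r - 1) / 2 = 1 + (r - 3) / 2 by ring, Real.rpow_add ha0, Real.rpow_one, ha,
      ← Real.rpow_mul hK0.le, show 2 / (r - 3) * ((r - 3) / 2) = 1 by field_simp, Real.rpow_one]
  have hw : 0 ≤ t ^ 2 / a := by positivity
  have hB := one_add_mul_self_le_rpow_one_add (s := t ^ 2 / a - 1) (by linarith)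
    (p := (r - 1) / 2) (by linarith)
  have htp : t ^ (r - 1) = a * K * (1 + (t ^ 2 / a - 1)) ^ ((r - 1) / 2) := by
    rw [add_sub_cancel, Real.div_rpow (by positivity) ha0.le, hap, ← Real.rpow_natCast,
      ← Real.rpow_mul ht]
    rw [show ((2 : ℕ) : ℝ) * ((r - 1) / 2) = r - 1 by push_cast; ring]
    field_simp
  have hid : β / 4 * (a * K * (1 + (r - 1) / 2 * (t ^ 2 / a - 1)))
      + (r - 3) / (2 * μ * (r - 1)) * a = 1 / (2 * μ) * t ^ 2 := by
    rw [hK]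
    field_simp
    ring
  rw [← hid, htp]
  gcongr

/-- Young's inequality for the contraction of a matrix with two vectors, with the Frobenius norm of
the matrix on the right. -/
lemma trilinear_young {d : ℕ} {μ : ℝ} (hμ : 0 < μ) (a b : EuclideanSpace ℝ (Fin d))
    (G : Fin d → Fin d → ℝ) :
    |∑ i, ∑ j, a i * G i j * b j| ≤
      μ / 2 * (∑ i, ∑ j, G i j ^ 2) + 1 / (2 * μ) * ‖b‖ ^ 2 * ‖a‖ ^ 2 := by
  have key : ∀ x y w : ℝ, |x * y * w| ≤ μ / 2 * y ^ 2 + 1 / (2 * μ) * (x ^ 2 * w ^ 2) := by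
    intro x y w
    have h1 : μ / 2 * y ^ 2 + 1 / (2 * μ) * (x ^ 2 * w ^ 2) - x * y * w
        = 1 / (2 * μ) * (μ * y - x * w) ^ 2 := by field_simp; ring
    have h2 : μ / 2 * y ^ 2 + 1 / (2 * μ) * (x ^ 2 * w ^ 2) + x * y * w
        = 1 / (2 * μ) * (μ * y + x * w) ^ 2 := by field_simp; ring
    have h3 : 0 ≤ 1 / (2 * μ) * (μ * y - x * w) ^ 2 := by positivity
    have h4 : 0 ≤ 1 / (2 * μ) * (μ * y + x * w) ^ 2 := by positivity
    exact abs_le.2 ⟨by linarith, by linarith⟩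
  calc |∑ i, ∑ j, a i * G i j * b j|
      ≤ ∑ i, ∑ j, |a i * G i j * b j| :=
        (Finset.abs_sum_le_sum_abs _ _).trans
          (Finset.sum_le_sum fun i _ => Finset.abs_sum_le_sum_abs _ _)
    _ ≤ ∑ i, ∑ j, (μ / 2 * G i j ^ 2 + 1 / (2 * μ) * (a i ^ 2 * b j ^ 2)) :=
        Finset.sum_le_sum fun i _ => Finset.sum_le_sum fun j _ => key _ _ _
    _ = _ := by
        rw [mul_assoc, mul_comm (‖b‖ ^ 2), EuclideanSpace.real_norm_sq_eq,
          EuclideanSpace.real_norm_sq_eq, Finset.sum_mul_sum]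
        simp only [Finset.sum_add_distrib, Finset.mul_sum]

/-- Estimate (5.21) of the paper: the convective term is absorbed by the viscous and
Forchheimer terms, `|b(z,z,u)| ≤ (μ/2)‖∇z‖_{L²}² + (β/4)∫ |u|^{r−1}|z|² + ζ ‖z‖_{L²}²`
with `ζ = ((r−3)/(2μ(r−1))) (4/(βμ(r−1)))^{2/(r−3)}`, for `r > 3`. -/
theorem convective_term_absorption
    (d : ℕ) (hd : 1 ≤ d) (r : ℝ) (hr : 3 < r) (μ β : ℝ) (hμ : 0 < μ) (hβ : 0 < β)
    (z u : EuclideanSpace ℝ (Fin d) → EuclideanSpace ℝ (Fin d))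
    (hz : ContDiff ℝ 1 z) (hzs : HasCompactSupport z) (hu : Measurable u)
    (hur : Integrable (fun x => ‖u x‖ ^ (r - 1) * ‖z x‖ ^ 2)) :
    |∫ x, ∑ i, ∑ j, z x i * fderiv ℝ z x (EuclideanSpace.single i 1) j * u x j| ≤
      (μ / 2) * (∫ x, ∑ i, ∑ j, (fderiv ℝ z x (EuclideanSpace.single i 1) j) ^ 2)
        + (β / 4) * (∫ x, ‖u x‖ ^ (r - 1) * ‖z x‖ ^ 2)
        + ((r - 3) / (2 * μ * (r - 1))) * (4 / (β * μ * (r - 1))) ^ (2 / (r - 3))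
            * (∫ x, ‖z x‖ ^ 2) := by
  have hc : Continuous (fderiv ℝ z) := hz.continuous_fderiv one_ne_zero
  have hG : Integrable (fun x =>
      ∑ i, ∑ j, (fderiv ℝ z x (EuclideanSpace.single i 1) j) ^ 2) := by
    refine Continuous.integrable_of_hasCompactSupport (by fun_prop) ?_
    exact (hzs.fderiv (𝕜 := ℝ)).comp_left
      (g := fun L : EuclideanSpace ℝ (Fin d) →L[ℝ] EuclideanSpace ℝ (Fin d) =>
        ∑ i, ∑ j, (L (EuclideanSpace.single i 1) j) ^ 2) (by simp)
  have hZ : Integrable (fun x => ‖z x‖ ^ 2) := by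
    have := hz.continuous
    refine Continuous.integrable_of_hasCompactSupport (by fun_prop) ?_
    exact hzs.comp_left (g := fun v : EuclideanSpace ℝ (Fin d) => ‖v‖ ^ 2) (by simp)
  rw [← integral_const_mul, ← integral_const_mul, ← integral_const_mul,
    ← integral_add (hG.const_mul _) (hur.const_mul _),
    ← integral_add ((hG.const_mul _).fun_add (hur.const_mul _)) (hZ.const_mul _), ← Real.norm_eq_abs]
  -- Domination of the norm yields the bound and spares a proof that the left integrand is integrable.
  refine norm_integral_le_of_norm_le
    (((hG.const_mul _).fun_add (hur.const_mul _)).add (hZ.const_mul _)) (ae_of_all _ fun x => ?_)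
  have h1 := trilinear_young hμ (z x) (u x)
    (fun i j => fderiv ℝ z x (EuclideanSpace.single i 1) j)
  have h2 := mul_le_mul_of_nonneg_right
    (sq_le_rpow_add_const hr hμ hβ (norm_nonneg (u x))) (sq_nonneg ‖z x‖)
  rw [Real.norm_eq_abs]
  refine h1.trans ?_
  linarith
end
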